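/- arXiv:0906.2716 — 9 statements merged into one kernel-verified Lean document; each statement's English description precedes it below -/
import Mathlib

section
/- Let i ≥ 1 and let u₁, …, u_{2i+1} be positive integers with convergents p_k, q_k, and set a = p_{2i+1}, b = q_{2i+1}. Then a·q_{2i} − b·p_{2i} = 1; the point L₁ = (b + 1 − q_{2i}, a − 1 − p_{2i}) satisfies a·(b + 1 − q_{2i}) − b·(a − 1 − p_{2i}) = a + b − 1 and 0 < b + 1 − q_{2i} ≤ b; moreover (b + 1 − q_{2i}, a − 1 − p_{2i}) = (u_{2i+1} − 1)·(q_{2i}, p_{2i}) + (q_{2i−1}, p_{2i−1}) + (1, −1) and (b, a) − (b + 1 − q_{2i}, a − 1 − p_{2i}) = (q_{2i} − 1, p_{2i} + 1). (This locates the lower leaning point L₁ inside a pattern of odd complexity 2i+1: U₁L₁ = (u_{2i+1}−1)(q_{2i},p_{2i}) + (q_{2i−1},p_{2i−1}) + (1,−1) and L₁U₂ = (q_{2i}−1, p_{2i}+1).) -/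
/-!
Everything follows from the determinant identity `p (k+1) * q k - q (k+1) * p k = (-1) ^ k`, taken at
the even index `k = 2 i`, and from the recurrence `q (2i+1) = u (2i+1) * q (2i) + q (2i-1)`. The
remainder of `L₁` is `a + b` minus that determinant. The bounds on its abscissa `b + 1 - q (2i)` say
`1 ≤ q (2i) ≤ b`, which holds because the partial quotients, hence the denominators, are positive.
The formula for `U₁L₁` is the recurrence for `q` and `p`, read coordinatewise; the one for `L₁U₂` is
a plain subtraction.
-/

/-- Continued-fraction numerators: `p 0 = 0`, `p 1 = 1`, `p k = u k * p (k-1) + p (k-2)`. -/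
def cfP (u : ℕ → ℤ) : ℕ → ℤ
  | 0 => 0
  | 1 => 1
  | (k+2) => u (k+2) * cfP u (k+1) + cfP u k

/-- Continued-fraction denominators: `q 0 = 1`, `q 1 = u 1`, `q k = u k * q (k-1) + q (k-2)`. -/
def cfQ (u : ℕ → ℤ) : ℕ → ℤ
  | 0 => 1
  | 1 => u 1
  | (k+2) => u (k+2) * cfQ u (k+1) + cfQ u k

theorem cfP_cfQ_det (u : ℕ → ℤ) (k : ℕ) :
    cfP u (k + 1) * cfQ u k - cfQ u (k + 1) * cfP u k = (-1) ^ k := by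
  induction k with
  | zero => simp [cfP, cfQ]
  | succ k ih =>
    rw [pow_succ, ← ih]
    simp only [cfP, cfQ]
    ring

/-- Positivity of the denominators; two consecutive ones are treated at once so that the
two-step recurrence goes through a one-step induction. -/
theorem cfQ_pos_pair (u : ℕ → ℤ) (n : ℕ) (hu : ∀ k, 1 ≤ k → k ≤ n → 0 < u k) (k : ℕ)
    (hk : k + 1 ≤ n) : 0 < cfQ u k ∧ 0 < cfQ u (k + 1) := by
  induction k with
  | zero => exact ⟨by simp [cfQ], by simpa [cfQ] using hu 1 le_rfl hk⟩
  | succ k ih =>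
    obtain ⟨h0, h1⟩ := ih (by omega)
    refine ⟨h1, ?_⟩
    have h2 := hu (k + 2) (by omega) hk
    simp only [cfQ]
    positivity

/-- Location of the lower leaning point `L₁` inside a pattern of odd complexity `2i+1`. -/
theorem odd_pattern_lower_leaning_point
    (i : ℕ) (hi : 1 ≤ i) (u : ℕ → ℤ)
    (hu : ∀ k, 1 ≤ k → k ≤ 2*i+1 → 0 < u k)
    (a b : ℤ) (ha : a = cfP u (2*i+1)) (hb : b = cfQ u (2*i+1)) :
    a * cfQ u (2*i) - b * cfP u (2*i) = 1 ∧
    a * (b + 1 - cfQ u (2*i)) - b * (a - 1 - cfP u (2*i)) = a + b - 1 ∧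
    (0 < b + 1 - cfQ u (2*i) ∧ b + 1 - cfQ u (2*i) ≤ b) ∧
    ((b + 1 - cfQ u (2*i), a - 1 - cfP u (2*i)) : ℤ × ℤ) =
      (u (2*i+1) - 1) • ((cfQ u (2*i), cfP u (2*i)) : ℤ × ℤ) +
        (cfQ u (2*i-1), cfP u (2*i-1)) + (1, -1) ∧
    ((b, a) : ℤ × ℤ) - (b + 1 - cfQ u (2*i), a - 1 - cfP u (2*i)) =
      (cfQ u (2*i) - 1, cfP u (2*i) + 1) := by
  obtain ⟨j, rfl⟩ : ∃ j, i = j + 1 := ⟨i - 1, by omega⟩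
  have hdet := cfP_cfQ_det u (2 * (j + 1))
  rw [Even.neg_one_pow (even_two_mul _), ← ha, ← hb] at hdet
  obtain ⟨hq0, hq1⟩ := cfQ_pos_pair u _ hu (2 * j + 1) (by omega)
  have hu1 := hu (2 * (j + 1) + 1) (by omega) le_rfl
  have hP : a = u (2 * (j + 1) + 1) * cfP u (2 * (j + 1)) + cfP u (2 * (j + 1) - 1) := ha
  have hQ : b = u (2 * (j + 1) + 1) * cfQ u (2 * (j + 1)) + cfQ u (2 * (j + 1) - 1) := hb
  change 0 < cfQ u (2 * (j + 1) - 1) at hq0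
  change 0 < cfQ u (2 * (j + 1)) at hq1
  refine ⟨hdet, by linear_combination -hdet, ⟨by nlinarith, by linarith⟩, ?_, ?_⟩
  · ext
    · simp only [Prod.fst_add, Prod.smul_fst, smul_eq_mul]
      linear_combination hQ
    · simp only [Prod.snd_add, Prod.smul_snd, smul_eq_mul]
      linear_combination hP
  · ext
    · simp only [Prod.fst_sub]
      ring
    · simp only [Prod.snd_sub]
      ring
end

section
/- Let i ≥ 1 and let u₁, …, u_{2i} be positive integers with convergents p_k, q_k, and set a = p_{2i}, b = q_{2i}. Then a·q_{2i−1} − b·p_{2i−1} = −1; the point L₁ = (q_{2i−1} + 1, p_{2i−1} − 1) satisfies a·(q_{2i−1} + 1) − b·(p_{2i−1} − 1) = a + b − 1 and 0 < q_{2i−1} + 1 ≤ b; moreover (b, a) − (q_{2i−1} + 1, p_{2i−1} − 1) = (u_{2i} − 1)·(q_{2i−1}, p_{2i−1}) + (q_{2i−2}, p_{2i−2}) + (−1, 1). (This locates the lower leaning point L₁ inside a pattern of even complexity 2i: U₁L₁ = (q_{2i−1}+1, p_{2i−1}−1) and L₁U₂ = (u_{2i}−1)(q_{2i−1},p_{2i−1})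 + (q_{2i−2},p_{2i−2}) + (−1,1).) -/
theorem cfP_mul_cfQ_sub (u : ℕ → ℤ) (k : ℕ) :
    cfP u (k+1) * cfQ u k - cfQ u (k+1) * cfP u k = (-1) ^ k := by
  induction k with
  | zero => simp [cfP, cfQ]
  | succ k ih =>
    rw [cfP, cfQ, pow_succ, ← ih]
    ring

theorem cfQ_pos (u : ℕ → ℤ) (n : ℕ) (hu : ∀ k, 1 ≤ k → k ≤ n → 0 < u k) :
    ∀ k, k ≤ n → 0 < cfQ u k
  | 0, _ => by simp [cfQ]
  | 1, h => by simpa [cfQ] using hu 1 le_rfl h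
  | k+2, h => by
    have h1 := cfQ_pos u n hu (k+1) (by omega)
    have h0 := cfQ_pos u n hu k (by omega)
    have h2 := hu (k+2) (by omega) h
    rw [cfQ]
    positivity

/-- Location of the lower leaning point `L₁` inside a pattern of even complexity `2i`. -/
theorem even_pattern_lower_leaning_point
    (i : ℕ) (hi : 1 ≤ i) (u : ℕ → ℤ)
    (hu : ∀ k, 1 ≤ k → k ≤ 2*i → 0 < u k)
    (a b : ℤ) (ha : a = cfP u (2*i)) (hb : b = cfQ u (2*i)) :
    a * cfQ u (2*i-1) - b * cfP u (2*i-1) = -1 ∧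
    a * (cfQ u (2*i-1) + 1) - b * (cfP u (2*i-1) - 1) = a + b - 1 ∧
    (0 < cfQ u (2*i-1) + 1 ∧ cfQ u (2*i-1) + 1 ≤ b) ∧
    ((b, a) : ℤ × ℤ) - (cfQ u (2*i-1) + 1, cfP u (2*i-1) - 1) =
      (u (2*i) - 1) • ((cfQ u (2*i-1), cfP u (2*i-1)) : ℤ × ℤ) +
        (cfQ u (2*i-2), cfP u (2*i-2)) + (-1, 1) := by
  obtain ⟨j, rfl⟩ : ∃ j, i = j + 1 := ⟨i - 1, by omega⟩
  have e0 : 2 * (j + 1) = 2 * j + 2 := by ring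
  have e1 : 2 * j + 2 - 1 = 2 * j + 1 := by omega
  have e2 : 2 * j + 2 - 2 = 2 * j := by omega
  rw [e0] at hu ha hb
  rw [e0, e1, e2]
  have hdet : a * cfQ u (2*j+1) - b * cfP u (2*j+1) = -1 := by
    rw [ha, hb, cfP_mul_cfQ_sub u (2*j+1)]
    simp [pow_succ, pow_mul]
  have hq1 := cfQ_pos u _ hu (2*j+1) (by omega)
  have hq0 := cfQ_pos u _ hu (2*j) (by omega)
  have hu2 := hu (2*j+2) (by omega) le_rfl
  rw [cfP] at ha
  rw [cfQ] at hb
  refine ⟨hdet, by linarith, ⟨by linarith, by nlinarith⟩, ?_⟩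
  ext
  · simp only [Prod.fst_sub, Prod.fst_add, Prod.smul_fst, smul_eq_mul, hb]
    ring
  · simp only [Prod.snd_sub, Prod.snd_add, Prod.smul_snd, smul_eq_mul, ha]
    ring
end

section
/- Let a, b be coprime integers with 0 < a < b, and let a/b = [0; u₁, …, u_n] be its canonical continued fraction expansion (all u_k ≥ 1, u_n ≥ 2), with n ≥ 2; n is called the complexity of the slope a/b. Let C : {0, …, N} → ℤ² be a path with C(k+1) − C(k) ∈ {(1,0), (0,1)} for all k, all of whose points lie in the standard line D(a,b,μ) for some integer μ, and suppose that C visits at least two upper leaning points (points of remainder μ); let V and V′ be the upper leaning points of smallest and largest abscissa. Call a point v of the point set P = {C(0), …, C(N)} an upper-hull vertex of P if v is an extreme point of the convex hull of P (in ℝ²) and there exist reals α, β with v.2 = α·v.1 + β and p.2 ≤ α·p.1 + β for all p ∈ P. Then P has at most n upper-hull vertices of abscissa strictly smaller than that of V, and at most n upper-hull vertices of abscissa strictly larger than that of V′. (A maximal digital straight segment includes at most n convex-hull edges on each side of its supporting edge.) -/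
/-- The canonical embedding of `ℤ × ℤ` into `ℝ × ℝ`. -/
def toR (p : ℤ × ℤ) : ℝ × ℝ := ((p.1 : ℝ), (p.2 : ℝ))

/-- `v` is an upper-hull vertex of the point set `P ⊆ ℤ²`: it belongs to `P`, is an
extreme point of the convex hull of `P` in `ℝ²`, and lies on a line `y = αx + β`
having all of `P` (weakly) below it. -/
def IsUpperHullVertex (P : Set (ℤ × ℤ)) (v : ℤ × ℤ) : Prop :=
  v ∈ P ∧ toR v ∈ Set.extremePoints ℝ (convexHull ℝ (toR '' P)) ∧
    ∃ α β : ℝ, (v.2 : ℝ) = α * (v.1 : ℝ) + β ∧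
      ∀ p ∈ P, (p.2 : ℝ) ≤ α * (p.1 : ℝ) + β

/-! ### Convexity at a hull vertex -/

/-- All lattice points on or below the upper leaning line, on a diagonal satisfying `I`, lie below
any line of nonnegative slope that bounds `P` from above; contact occurs only at points of `P`.
Indeed such a point slides up its diagonal, by a multiple of `(-1, 1)`, to a point of `P`. -/
lemma below_support {a b μ : ℤ} (hs : 0 < a + b) {P : Set (ℤ × ℤ)} {I : ℤ → Prop}
    (hP : ∀ p : ℤ × ℤ, μ ≤ a * p.1 - b * p.2 → a * p.1 - b * p.2 < μ + (a + b) →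
      I (p.1 + p.2) → p ∈ P)
    {α β : ℝ} (hα : 0 ≤ α) (hline : ∀ p ∈ P, (p.2 : ℝ) ≤ α * (p.1 : ℝ) + β)
    (p : ℤ × ℤ) (hr : μ ≤ a * p.1 - b * p.2) (hI : I (p.1 + p.2)) :
    (p.2 : ℝ) ≤ α * (p.1 : ℝ) + β ∧ ((p.2 : ℝ) = α * (p.1 : ℝ) + β → p ∈ P) := by
  obtain ⟨j, hj⟩ : ∃ j, j = (a * p.1 - b * p.2 - μ) / (a + b) := ⟨_, rfl⟩
  have h1 := Int.emod_add_mul_ediv (a * p.1 - b * p.2 - μ) (a + b)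
  have h2 := Int.emod_nonneg (a * p.1 - b * p.2 - μ) hs.ne'
  have h3 := Int.emod_lt_of_pos (a * p.1 - b * p.2 - μ) hs
  have hj0 : 0 ≤ j := hj ▸ Int.ediv_nonneg (by linarith) hs.le
  rw [← hj] at h1
  have hmem : ((p.1 - j, p.2 + j) : ℤ × ℤ) ∈ P := by
    apply hP
    · dsimp only; linarith
    · dsimp only; linarith
    · have : p.1 - j + (p.2 + j) = p.1 + p.2 := by ring
      simpa [this] using hI
  have hl := hline _ hmem
  push_cast at hl
  have hj0' : (0 : ℝ) ≤ j := by exact_mod_cast hj0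
  have hαj := mul_nonneg hα hj0'
  refine ⟨by nlinarith, fun heq => ?_⟩
  have : (j : ℝ) = 0 := by nlinarith
  have : j = 0 := by exact_mod_cast this
  subst this
  simpa using hmem

/-- With `w = v₂ - v`, a point `v` such that `v₁ = v - m w ≠ v` and `v₂ = v + w` both lie in `P`
(`m ≥ 1`) is not extreme. -/
lemma not_extreme_of_collinear {P : Set (ℤ × ℤ)} {v v₁ v₂ : ℤ × ℤ} {m : ℤ} (hm : 1 ≤ m)
    (h₁ : v₁ ∈ P) (h₂ : v₂ ∈ P) (hne : v₁ ≠ v)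
    (hx : v.1 - v₁.1 = m * (v₂.1 - v.1)) (hy : v.2 - v₁.2 = m * (v₂.2 - v.2)) :
    toR v ∉ Set.extremePoints ℝ (convexHull ℝ (toR '' P)) := by
  intro hv
  have hm' : (1 : ℝ) ≤ m := by exact_mod_cast hm
  have hx' : (v.1 : ℝ) - v₁.1 = m * (v₂.1 - v.1) := by exact_mod_cast hx
  have hy' : (v.2 : ℝ) - v₁.2 = m * (v₂.2 - v.2) := by exact_mod_cast hy
  have hseg : toR v ∈ openSegment ℝ (toR v₁) (toR v₂) := by
    refine ⟨1 / (1 + m), m / (1 + m), by positivity, by positivity, by field_simp, ?_⟩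
    have hpos : (1 + m : ℝ) ≠ 0 := by positivity
    ext
    · simp only [toR, Prod.smul_mk, Prod.mk_add_mk, smul_eq_mul]
      field_simp
      linarith
    · simp only [toR, Prod.smul_mk, Prod.mk_add_mk, smul_eq_mul]
      field_simp
      linarith
  have := (mem_extremePoints.1 hv).2 _ (subset_convexHull ℝ _ ⟨_, h₁, rfl⟩) _
    (subset_convexHull ℝ _ ⟨_, h₂, rfl⟩) hseg
  apply hne
  have h := this.1
  simp only [toR, Prod.mk.injEq, Int.cast_inj] at h
  exact Prod.ext h.1 h.2

/-- Signs of the coordinates `A`, `B` of an edge in a basis with diagonal lengths `t₁`, `t₂`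
and remainders `s₁ > 0 ≥ s₂`, when the edge has positive remainder and length below `t₂`. -/
lemma coeff_signs_good {A B t₁ t₂ s₁ s₂ : ℤ} (ht₁ : 0 < t₁) (ht₂ : 0 < t₂) (hs₁ : 0 < s₁)
    (hs₂ : s₂ ≤ 0) (hs : 0 < A * s₁ + B * s₂) (h0 : 0 < A * t₁ + B * t₂)
    (h1 : A * t₁ + B * t₂ < t₂) : 1 ≤ A ∧ B ≤ 0 := by
  have hA1 : 1 ≤ A := by
    by_contra! hA0
    have hA0 : A ≤ 0 := by linarith
    have hB0 : B < 0 := by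
      by_contra! hB0
      nlinarith
    nlinarith
  refine ⟨hA1, ?_⟩
  by_contra! hB0
  nlinarith

/-- The counterpart of `coeff_signs_good` for remainders `s₁ < 0 ≤ s₂`. -/
lemma coeff_signs_bad {A B t₁ t₂ s₁ s₂ : ℤ} (ht₁ : 0 < t₁) (ht₂ : 0 < t₂) (hs₁ : s₁ < 0)
    (hs₂ : 0 ≤ s₂) (hs : 0 < A * s₁ + B * s₂) (h0 : 0 < A * t₁ + B * t₂)
    (h1 : A * t₁ + B * t₂ < t₂) : A ≤ -1 ∧ 1 ≤ B := by
  have hA1 : A ≤ -1 := by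
    by_contra! hA0
    have hA0 : 0 ≤ A := by linarith
    have hB0 : 0 < B := by
      by_contra! hB0
      nlinarith
    nlinarith
  refine ⟨hA1, ?_⟩
  by_contra! hB0
  have : B ≤ 0 := by linarith
  nlinarith

/-- The key drop. Here `w₁ = (q₁, p₁)`, `w₂ = (q₂, p₂)` are consecutive convergent vectors (a
basis of `ℤ²`, with remainders of opposite signs), `σ = ±1` is the direction of travel, and the
path meets every diagonal `x + y` at distance at most `T` from `c` in that direction. If the path
continues from `v` by fewer steps than the diagonal length `q₂ + p₂` of `w₂`, then it continues
from any later hull vertex `v'` of larger remainder by fewer steps than that of `w₁`. Otherwise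
`v' + σ w₁` would contradict convexity at `v'`. -/
lemma steps_left_drop {a b μ σ T c : ℤ} (ha : 0 < a) (hb : a < b) (hσ : σ = 1 ∨ σ = -1)
    {P : Set (ℤ × ℤ)}
    (hP : ∀ p : ℤ × ℤ, μ ≤ a * p.1 - b * p.2 → a * p.1 - b * p.2 < μ + (a + b) →
      (0 ≤ σ * (p.1 + p.2 - c) ∧ σ * (p.1 + p.2 - c) ≤ T) → p ∈ P)
    {q₁ p₁ q₂ p₂ δ : ℤ} (hq₁ : 1 ≤ q₁) (hp₁ : 0 ≤ p₁)
    (hδ : δ = 1 ∨ δ = -1) (hdet : p₂ * q₁ - p₁ * q₂ = δ)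
    (hr₁ : 0 < δ * (a * q₁ - b * p₁)) (hr₂ : δ * (a * q₂ - b * p₂) ≤ 0)
    {v v' : ℤ × ℤ} (hv : v ∈ P) (hv' : IsUpperHullVertex P v')
    (hrv : μ ≤ a * v.1 - b * v.2)
    (hrvv' : a * v.1 - b * v.2 < a * v'.1 - b * v'.2)
    (hrv' : a * v'.1 - b * v'.2 < μ + (a + b))
    (hx : 0 ≤ σ * (v'.1 - v.1)) (hy : 0 ≤ σ * (v'.2 - v.2))
    (ht0 : 0 ≤ σ * (v.1 + v.2 - c))
    (ht : σ * (v.1 + v.2 - c) < σ * (v'.1 + v'.2 - c))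
    (hL : T - σ * (v.1 + v.2 - c) < q₂ + p₂) :
    T - σ * (v'.1 + v'.2 - c) < q₁ + p₁ := by
  by_contra! hcon
  obtain ⟨hv'P, hext, α, β, hvl, hline⟩ := hv'
  have hσσ : σ * σ = 1 := by rcases hσ with h | h <;> subst h <;> norm_num
  have hδδ : δ * δ = 1 := by rcases hδ with h | h <;> subst h <;> norm_num
  obtain ⟨x, hxe⟩ : ∃ x, x = σ * (v'.1 - v.1) := ⟨_, rfl⟩
  obtain ⟨y, hye⟩ : ∃ y, y = σ * (v'.2 - v.2) := ⟨_, rfl⟩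
  have hvx : v'.1 - v.1 = σ * x := by rw [hxe]; linear_combination (-(v'.1 - v.1)) * hσσ
  have hvy : v'.2 - v.2 = σ * y := by rw [hye]; linear_combination (-(v'.2 - v.2)) * hσσ
  rw [← hxe] at hx
  rw [← hye] at hy
  have hte : 0 < x + y := by rw [hxe, hye]; linarith
  have hte2 : x + y + (q₁ + p₁) < q₂ + p₂ := by rw [hxe, hye]; linarith
  have hRd : σ * (a * x - b * y) = (a * v'.1 - b * v'.2) - (a * v.1 - b * v.2) := by
    linear_combination (-a) * hvx + b * hvy
  have hR : 0 < σ * (a * x - b * y) := by linarith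
  have hve := hline v hv
  have hvxR : (v'.1 : ℝ) - v.1 = σ * x := by exact_mod_cast hvx
  have hvyR : (v'.2 : ℝ) - v.2 = σ * y := by exact_mod_cast hvy
  have hfe : 0 ≤ (σ : ℝ) * (y - α * x) := by
    have : (σ : ℝ) * (y - α * x) = (v'.2 - v.2) - α * (v'.1 - v.1) := by
      rw [hvxR, hvyR]; ring
    linarith
  -- the supporting slope is nonnegative: forwards because the path continues past `v'`,
  -- backwards because `v` lies to the right of `v'`
  have hα : 0 ≤ α := by
    rcases hσ with h | h
    · -- the next point on the path is `v' + (1, 0)` or `v' + (0, 1)`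
      subst h
      have hstep : v' + (1, 0) ∈ P ∨ v' + (0, 1) ∈ P := by
        by_cases hc : a * v'.1 - b * v'.2 + a < μ + (a + b)
        · left
          apply hP <;> simp only [Prod.fst_add, Prod.snd_add]
          · linarith
          · linarith
          · constructor <;> linarith
        · right
          apply hP <;> simp only [Prod.fst_add, Prod.snd_add]
          · linarith
          · linarith
          · constructor <;> linarith
      rcases hstep with h | h
      · have := hline _ h
        simp only [Prod.fst_add, Prod.snd_add] at this
        push_cast at this
        linarith
      · have := hline _ h
        simp only [Prod.fst_add, Prod.snd_add] at this
        push_cast at this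
        linarith
    · subst h
      have hxR : (0 : ℝ) ≤ x := by exact_mod_cast hx
      have hyR : (0 : ℝ) ≤ y := by exact_mod_cast hy
      have htR : (0 : ℝ) < x + y := by exact_mod_cast hte
      push_cast at hfe
      by_contra! hneg
      have e := mul_nonneg hxR (neg_nonneg.2 hneg.le)
      have hxpos : (0 : ℝ) < x := by linarith
      have := mul_pos_of_neg_of_neg hneg (neg_neg_of_pos hxpos)
      linarith
  obtain ⟨A, hA⟩ : ∃ A, A = δ * (x * p₂ - y * q₂) := ⟨_, rfl⟩
  obtain ⟨B, hB⟩ : ∃ B, B = δ * (q₁ * y - p₁ * x) := ⟨_, rfl⟩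
  have hxAB : x = A * q₁ + B * q₂ := by
    rw [hA, hB]; linear_combination (-x) * hδδ - δ * x * hdet
  have hyAB : y = A * p₁ + B * p₂ := by
    rw [hA, hB]; linear_combination (-y) * hδδ - δ * y * hdet
  have htAB : x + y = A * (q₁ + p₁) + B * (q₂ + p₂) := by rw [hxAB, hyAB]; ring
  have hRAB : σ * (a * x - b * y) =
      A * (σ * (a * q₁ - b * p₁)) + B * (σ * (a * q₂ - b * p₂)) := by
    rw [hxAB, hyAB]; ring
  rw [hRAB] at hR
  rw [htAB] at hte hte2
  -- whatever the sign, `v' + σ w₁` stays on or below the upper leaning line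
  have hcases : (δ = σ ∧ 1 ≤ A ∧ B ≤ 0 ∧ 0 < σ * (a * q₁ - b * p₁)) ∨
      (δ = -σ ∧ 1 ≤ B ∧ 0 ≤ (a * v'.1 - b * v'.2) - μ + σ * (a * q₁ - b * p₁)) := by
    have hd : δ = σ ∨ δ = -σ := by
      rcases hδ with h | h <;> rcases hσ with h' | h' <;> subst h <;> subst h' <;> simp
    rcases hd with h | h
    · left
      subst h
      obtain ⟨hA1, hB0⟩ := coeff_signs_good (by linarith) (by linarith) hr₁ hr₂ hR hte
        (by linarith)
      exact ⟨rfl, hA1, hB0, hr₁⟩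
    · right
      subst h
      have hs1 : σ * (a * q₁ - b * p₁) < 0 := by linarith
      have hs2 : 0 ≤ σ * (a * q₂ - b * p₂) := by linarith
      obtain ⟨hA1, hB1⟩ := coeff_signs_bad (by linarith) (by linarith) hs1 hs2 hR hte
        (by linarith)
      refine ⟨rfl, hB1, ?_⟩
      have e1 : 0 ≤ (A + 1) * (σ * (a * q₁ - b * p₁)) :=
        mul_nonneg_of_nonpos_of_nonpos (by linarith) hs1.le
      have e2 : 0 ≤ B * (σ * (a * q₂ - b * p₂)) := mul_nonneg (by linarith) hs2
      linarith
  obtain ⟨w, hw⟩ : ∃ w : ℤ × ℤ, w = (v'.1 + σ * q₁, v'.2 + σ * p₁) := ⟨_, rfl⟩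
  have hw1 : w.1 = v'.1 + σ * q₁ := by rw [hw]
  have hw2 : w.2 = v'.2 + σ * p₁ := by rw [hw]
  have hwt : σ * (w.1 + w.2 - c) = σ * (v'.1 + v'.2 - c) + (q₁ + p₁) := by
    rw [hw1, hw2]; linear_combination (q₁ + p₁) * hσσ
  have hwr : μ ≤ a * w.1 - b * w.2 := by
    have : a * w.1 - b * w.2 = a * v'.1 - b * v'.2 + σ * (a * q₁ - b * p₁) := by
      rw [hw1, hw2]; ring
    rcases hcases with h | h <;> linarith
  have hbel := below_support (I := fun t => 0 ≤ σ * (t - c) ∧ σ * (t - c) ≤ T)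
    (by linarith) hP hα hline w hwr ⟨by linarith, by linarith⟩
  have hw1R : (w.1 : ℝ) = v'.1 + σ * q₁ := by exact_mod_cast hw1
  have hw2R : (w.2 : ℝ) = v'.2 + σ * p₁ := by exact_mod_cast hw2
  have hfw : (σ : ℝ) * (p₁ - α * q₁) ≤ 0 := by
    have := hbel.1
    rw [hw1R, hw2R] at this
    linarith
  -- compare the slopes of the edge `v v'` and of `w₁`
  have hcross : 0 ≤ σ * (q₁ * y - p₁ * x) := by
    have hxR : (0 : ℝ) ≤ x := by exact_mod_cast hx
    have hqR : (0 : ℝ) ≤ q₁ := by exact_mod_cast (by linarith : (0 : ℤ) ≤ q₁)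
    have e1 := mul_nonneg hqR hfe
    have e2 := mul_nonneg hxR (neg_nonneg.2 hfw)
    have : (0 : ℝ) ≤ σ * (q₁ * y - p₁ * x) := by linarith
    exact_mod_cast this
  have hcr : σ * (q₁ * y - p₁ * x) = σ * δ * B := by
    rw [hB]; linear_combination (-(σ * (q₁ * y - p₁ * x))) * hδδ
  rw [hcr] at hcross
  rcases hcases with ⟨h, hA1, hB0, -⟩ | ⟨h, hB1, -⟩
  · rw [h, hσσ] at hcross
    have hB00 : B = 0 := by linarith
    have hx' : x = A * q₁ := by rw [hxAB, hB00]; ring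
    have hy' : y = A * p₁ := by rw [hyAB, hB00]; ring
    have hfw0 : (σ : ℝ) * (p₁ - α * q₁) = 0 := by
      have hAR : (1 : ℝ) ≤ A := by exact_mod_cast hA1
      rw [hx', hy'] at hfe
      push_cast at hfe
      nlinarith
    have hwP : w ∈ P := hbel.2 (by rw [hw1R, hw2R]; linarith)
    refine not_extreme_of_collinear hA1 hv hwP ?_ ?_ ?_ hext
    · rintro rfl; linarith
    · rw [hvx, hw1, hx']; ring
    · rw [hvy, hw2, hy']; ring
  · rw [h] at hcross
    have : σ * -σ * B = -B := by linear_combination (-B) * hσσ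
    linarith

/-! ### Counting, and facts on convergents -/

/-- Counting: if the values of `L` on `S` are nonnegative, below `q n`, and each comparison
`L y < L x < q (k + 1)` forces `L y < q k`, then `S` has at most `n + 1` elements. -/
lemma card_le_of_drop {ι : Type*} [DecidableEq ι] (L : ι → ℤ) (q : ℕ → ℤ) (hq0 : q 0 = 1) (n : ℕ) :
    ∀ S : Finset ι, (∀ x ∈ S, 0 ≤ L x ∧ L x < q n) → Set.InjOn L S →
      (∀ k < n, ∀ x ∈ S, ∀ y ∈ S, L y < L x → L x < q (k + 1) → L y < q k) →
      S.card ≤ n + 1 := by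
  induction n with
  | zero =>
    intro S hS hinj _
    refine Finset.card_le_one.2 fun x hx y hy => hinj hx hy ?_
    have h1 := hS x hx
    have h2 := hS y hy
    omega
  | succ n ih =>
    intro S hS hinj hd
    rcases S.eq_empty_or_nonempty with rfl | hne
    · simp
    obtain ⟨m, hm, hmax⟩ := S.exists_max_image L hne
    have hsub : ∀ x ∈ S.erase m, x ∈ S := fun x hx => Finset.mem_of_mem_erase hx
    have := ih (S.erase m) (fun x hx => ⟨(hS x (hsub x hx)).1, ?_⟩)
      (hinj.mono (by simp))
      (fun k hk x hx y hy => hd k (by omega) x (hsub x hx) y (hsub y hy))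
    · rw [Finset.card_erase_of_mem hm] at this
      omega
    · refine hd n (by omega) m hm x (hsub x hx) ?_ (hS m hm).2
      refine lt_of_le_of_ne (hmax x (hsub x hx)) fun h => ?_
      exact Finset.ne_of_mem_erase hx (hinj (hsub x hx) hm h)

lemma cf_det (u : ℕ → ℤ) (k : ℕ) :
    cfP u (k + 1) * cfQ u k - cfP u k * cfQ u (k + 1) = (-1) ^ k := by
  induction k with
  | zero => simp [cfP, cfQ]
  | succ k ih =>
    simp only [cfP, cfQ, pow_succ] at ih ⊢
    linear_combination (-1) * ih

lemma cf_bounds (u : ℕ → ℤ) (n : ℕ) (hu : ∀ k, 1 ≤ k → k ≤ n → 1 ≤ u k) (k : ℕ) (hk : k ≤ n) :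
    0 ≤ cfP u k ∧ 1 ≤ cfQ u k := by
  induction k using Nat.strong_induction_on with
  | _ k ih =>
    match k with
    | 0 => simp [cfP, cfQ]
    | 1 => simpa [cfP, cfQ] using hu 1 le_rfl hk
    | k + 2 =>
      have h1 := ih (k + 1) (by omega) (by omega)
      have h0 := ih k (by omega) (by omega)
      have hu' := hu (k + 2) (by omega) hk
      simp only [cfP, cfQ]
      constructor <;> nlinarith

/-- The remainders of the convergent vectors `(q_k, p_k)` alternate in sign, down to `0` at
`k = n`. -/
lemma cf_rem (u : ℕ → ℤ) (n : ℕ) (hu : ∀ k, 1 ≤ k → k ≤ n → 1 ≤ u k) (k : ℕ) (hk : k < n) :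
    0 < (-1) ^ k * (cfP u n * cfQ u k - cfQ u n * cfP u k) ∧
    (-1) ^ k * (cfP u n * cfQ u (k + 1) - cfQ u n * cfP u (k + 1)) ≤ 0 := by
  obtain ⟨m, rfl⟩ : ∃ m, n = k + 1 + m := ⟨n - (k + 1), by omega⟩
  obtain ⟨n, hn⟩ : ∃ n, n = k + 1 + m := ⟨_, rfl⟩
  rw [← hn] at hu ⊢
  clear hk
  have hsq : ∀ k : ℕ, ((-1 : ℤ) ^ k) * (-1) ^ k = 1 := fun k => by
    rw [← mul_pow]; norm_num
  induction m generalizing k with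
  | zero =>
    have hn : n = k + 1 := by omega
    subst hn
    have h := cf_det u k
    constructor
    · have : (-1 : ℤ) ^ k * (cfP u (k + 1) * cfQ u k - cfQ u (k + 1) * cfP u k) = 1 := by
        linear_combination (-1) ^ k * h + hsq k
      omega
    · rw [mul_comm (cfP u (k + 1))]; simp
  | succ m ih =>
    obtain ⟨h1, h2⟩ := ih (k + 1) (by omega)
    have hu' := hu (k + 2) (by omega) (by omega)
    simp only [cfP, cfQ] at h2
    rw [pow_succ] at h1 h2
    constructor
    · nlinarith
    · nlinarith

/-! ### The bound on one side -/

/-- If the remainder increases from `V` to a hull vertex `v`, then it increases strictly from `v`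
to any point `v'` of `P` further on in the same direction: the slope of the supporting line at `v`
is already smaller (`σ = 1`) or larger (`σ = -1`) than `a / b`. -/
lemma rem_lt_of_support {a b σ : ℤ} (hb : 0 < b) (hσ : σ = 1 ∨ σ = -1)
    {P : Set (ℤ × ℤ)} {V v v' : ℤ × ℤ} (hV : V ∈ P) (hv : IsUpperHullVertex P v) (hv' : v' ∈ P)
    (hr : a * V.1 - b * V.2 < a * v.1 - b * v.2)
    (hx₁ : 0 < σ * (v.1 - V.1)) (hx₂ : 0 ≤ σ * (v'.1 - v.1)) (hy₂ : 0 ≤ σ * (v'.2 - v.2))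
    (ht : 0 < σ * (v'.1 - v.1) + σ * (v'.2 - v.2)) :
    a * v.1 - b * v.2 < a * v'.1 - b * v'.2 := by
  obtain ⟨-, -, α, β, hvl, hline⟩ := hv
  have h₁ := hline V hV
  have h₂ := hline v' hv'
  have hbR : (0 : ℝ) < b := by exact_mod_cast hb
  have hrR : (a : ℝ) * V.1 - b * V.2 < a * v.1 - b * v.2 := by exact_mod_cast hr
  suffices (a : ℝ) * v.1 - b * v.2 < a * v'.1 - b * v'.2 by exact_mod_cast this
  have hy₁' : (v.2 : ℝ) - V.2 ≥ α * (v.1 - V.1) := by linarith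
  have hy₂' : (v'.2 : ℝ) - v.2 ≤ α * (v'.1 - v.1) := by linarith
  have e₁ := mul_le_mul_of_nonneg_left hy₁' hbR.le
  have e₂ := mul_le_mul_of_nonneg_left hy₂' hbR.le
  have hs : 0 < (a - b * α) * ((v.1 : ℝ) - V.1) := by linarith
  rcases hσ with h | h
  · subst h
    have hx₁R : (0 : ℝ) < v.1 - V.1 := by exact_mod_cast (by linarith : 0 < v.1 - V.1)
    have hx₂R : (0 : ℝ) ≤ v'.1 - v.1 := by exact_mod_cast (by linarith : 0 ≤ v'.1 - v.1)
    have htR : (0 : ℝ) < (v'.1 - v.1) + (v'.2 - v.2) := by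
      exact_mod_cast (by linarith : 0 < (v'.1 - v.1) + (v'.2 - v.2))
    have hslope := pos_of_mul_pos_left hs hx₁R.le
    have hx₂pos : (0 : ℝ) < v'.1 - v.1 := by
      refine lt_of_le_of_ne hx₂R fun h0 => ?_
      rw [← h0] at hy₂' htR
      linarith
    have := mul_pos hslope hx₂pos
    linarith
  · subst h
    have hx₁R : (v.1 : ℝ) - V.1 < 0 := by exact_mod_cast (by linarith : v.1 - V.1 < 0)
    have hx₂R : (v'.1 : ℝ) - v.1 ≤ 0 := by exact_mod_cast (by linarith : v'.1 - v.1 ≤ 0)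
    have hy₂R : (v'.2 : ℝ) - v.2 ≤ 0 := by exact_mod_cast (by linarith : v'.2 - v.2 ≤ 0)
    have htR : ((v'.1 : ℝ) - v.1) + (v'.2 - v.2) < 0 := by
      exact_mod_cast (by linarith : (v'.1 - v.1) + (v'.2 - v.2) < 0)
    have hslope : a - b * α < 0 := by
      by_contra! h0
      nlinarith
    rcases hx₂R.lt_or_eq with hlt | heq
    · have := mul_pos_of_neg_of_neg hslope hlt
      linarith
    · rw [heq] at htR
      have := mul_neg_of_pos_of_neg hbR (by linarith : (v'.2 : ℝ) - v.2 < 0)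
      have : (a : ℝ) * (v'.1 - v.1) = 0 := by rw [heq, mul_zero]
      linarith

/-- The bound on one side: `σ = 1` counts the hull vertices to the right of the upper leaning
point `V`, and `σ = -1` those to its left. `T` is the number of path steps beyond `V`. -/
lemma side_bound {a b μ σ T : ℤ} (ha : 0 < a) (hb : a < b) (hσ : σ = 1 ∨ σ = -1)
    (u : ℕ → ℤ) (n : ℕ) (hu : ∀ k, 1 ≤ k → k ≤ n → 1 ≤ u k)
    (hpa : cfP u n = a) (hqb : cfQ u n = b)
    {P : Set (ℤ × ℤ)} (hfin : P.Finite) {V : ℤ × ℤ} (hVP : V ∈ P) (hV : a * V.1 - b * V.2 = μ)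
    (hPr : ∀ p ∈ P, μ ≤ a * p.1 - b * p.2 ∧ a * p.1 - b * p.2 < μ + (a + b))
    (hmono : ∀ p ∈ P, ∀ p' ∈ P, p.1 + p.2 ≤ p'.1 + p'.2 → p.1 ≤ p'.1 ∧ p.2 ≤ p'.2)
    (hP : ∀ p : ℤ × ℤ, μ ≤ a * p.1 - b * p.2 → a * p.1 - b * p.2 < μ + (a + b) →
      (0 ≤ σ * (p.1 + p.2 - (V.1 + V.2)) ∧ σ * (p.1 + p.2 - (V.1 + V.2)) ≤ T) → p ∈ P)
    (hT : ∀ p ∈ P, σ * (p.1 + p.2 - (V.1 + V.2)) ≤ T)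
    (hlast : ∀ p ∈ P, a * p.1 - b * p.2 = μ → σ * (p.1 - V.1) ≤ 0) :
    {v : ℤ × ℤ | IsUpperHullVertex P v ∧ 0 < σ * (v.1 - V.1)}.ncard ≤ n := by
  classical
  have hSfin : {v : ℤ × ℤ | IsUpperHullVertex P v ∧ 0 < σ * (v.1 - V.1)}.Finite :=
    hfin.subset fun v hv => hv.1.1
  rw [Set.ncard_eq_toFinset_card _ hSfin]
  set F := hSfin.toFinset with hF
  have hFmem : ∀ v ∈ F, IsUpperHullVertex P v ∧ 0 < σ * (v.1 - V.1) := by simp [hF]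
  have hVF : V ∉ F := fun h => by simpa using (hFmem V h).2
  have hT0 : 0 ≤ T := by simpa using hT V hVP
  -- one more period would reach another upper leaning point
  have hTlt : T < a + b := by
    by_contra! hcon
    have hσσ : σ * σ = 1 := by rcases hσ with h | h <;> subst h <;> norm_num
    have hr : a * (V.1 + σ * b) - b * (V.2 + σ * a) = μ := by rw [← hV]; ring
    have hmem := hP (V.1 + σ * b, V.2 + σ * a) hr.ge (by rw [hr]; linarith) (by
      have : σ * (V.1 + σ * b + (V.2 + σ * a) - (V.1 + V.2)) = a + b := by
        linear_combination (a + b) * hσσ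
      simp only [this]
      constructor <;> linarith)
    have := hlast _ hmem hr
    have e : σ * (V.1 + σ * b - V.1) = b := by linear_combination b * hσσ
    simp only [e] at this
    linarith
  -- coordinates are monotone along the path, in the direction of `σ`
  have hmonoσ : ∀ p ∈ P, ∀ p' ∈ P,
      σ * (p.1 + p.2 - (V.1 + V.2)) ≤ σ * (p'.1 + p'.2 - (V.1 + V.2)) →
      0 ≤ σ * (p'.1 - p.1) ∧ 0 ≤ σ * (p'.2 - p.2) := by
    intro p hp p' hp' h
    rcases hσ with hs | hs <;> subst hs
    · have := hmono p hp p' hp' (by linarith)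
      constructor <;> linarith
    · have := hmono p' hp' p hp (by linarith)
      constructor <;> linarith
  have hFt : ∀ v ∈ F, 0 < σ * (v.1 + v.2 - (V.1 + V.2)) := by
    intro v hv
    obtain ⟨hv1, hv2⟩ := hFmem v hv
    by_contra! hcon
    have := (hmonoσ v hv1.1 V hVP (by simpa using hcon)).1
    linarith
  have hFr : ∀ v ∈ F, μ < a * v.1 - b * v.2 := by
    intro v hv
    obtain ⟨hv1, hv2⟩ := hFmem v hv
    refine lt_of_le_of_ne (hPr v hv1.1).1 fun h => ?_
    have := hlast v hv1.1 h.symm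
    linarith
  have hFP : ∀ v ∈ insert V F, v ∈ P := by
    intro v hv
    rcases Finset.mem_insert.1 hv with rfl | hv
    · exact hVP
    · exact (hFmem v hv).1.1
  have hIt : ∀ v ∈ insert V F, 0 ≤ σ * (v.1 + v.2 - (V.1 + V.2)) := by
    intro v hv
    rcases Finset.mem_insert.1 hv with rfl | hv
    · simp
    · exact (hFt v hv).le
  have key := card_le_of_drop (fun v : ℤ × ℤ => T - σ * (v.1 + v.2 - (V.1 + V.2)))
    (fun k => cfQ u k + cfP u k) (by simp [cfP, cfQ]) n (insert V F) ?_ ?_ ?_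
  · rw [Finset.card_insert_of_notMem hVF] at key
    omega
  · intro v hv
    have h1 := hT v (hFP v hv)
    have h2 := hIt v hv
    rw [hpa, hqb]
    constructor <;> linarith
  · intro v hv v' hv' h
    have h1 := hmonoσ v (hFP v hv) v' (hFP v' hv') (by linarith)
    have h2 := hmonoσ v' (hFP v' hv') v (hFP v hv) (by linarith)
    rcases hσ with hs | hs <;> subst hs <;> ext <;> linarith
  · intro k hk v hv v' hv' hlt hL
    have hv'F : v' ∈ F := by
      rcases Finset.mem_insert.1 hv' with rfl | h
      · have := hIt v hv
        simp only [sub_self, mul_zero] at hlt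
        linarith
      · exact h
    obtain ⟨hx, hy⟩ := hmonoσ v (hFP v hv) v' (hFP v' hv') (by linarith)
    have hrr : a * v.1 - b * v.2 < a * v'.1 - b * v'.2 := by
      rcases Finset.mem_insert.1 hv with rfl | h
      · rw [hV]; exact hFr v' hv'F
      · exact rem_lt_of_support (by linarith) hσ hVP (hFmem v h).1 (hFP v' hv')
          (by rw [hV]; exact hFr v h) (hFmem v h).2 hx hy (by linarith)
    obtain ⟨hp₁, hq₁⟩ := cf_bounds u n hu k hk.le
    obtain ⟨hr₁, hr₂⟩ := cf_rem u n hu k hk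
    rw [hpa, hqb] at hr₁ hr₂
    exact steps_left_drop ha hb hσ hP hq₁ hp₁ (neg_one_pow_eq_or ℤ k) (cf_det u k) hr₁ hr₂
      (hFP v hv) (hFmem v' hv'F).1 (hPr v (hFP v hv)).1 hrr (hPr v' (hFP v' hv')).2 hx hy
      (hIt v hv) (by linarith) hL

/-- A maximal digital straight segment of slope `a/b = [0; u 1, …, u n]` includes at
most `n` upper-hull vertices (hence at most `n` convex-hull edges) on each side of its
supporting edge, whose endpoints `V = C k₀` and `V' = C k₁` are the extremal upper
leaning points. -/
theorem maximal_segment_at_most_n_edges_on_each_side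
    (a b : ℤ) (hab : IsCoprime a b) (ha : 0 < a) (hb : a < b)
    (u : ℕ → ℤ) (n : ℕ) (hn : 2 ≤ n)
    (hu : ∀ k, 1 ≤ k → k ≤ n → 1 ≤ u k) (hun : 2 ≤ u n)
    (hpa : cfP u n = a) (hqb : cfQ u n = b)
    (N : ℕ) (C : ℕ → ℤ × ℤ)
    (hstep : ∀ k < N, C (k+1) - C k ∈ ({(1,0), (0,1)} : Set (ℤ × ℤ)))
    (μ : ℤ)
    (hin : ∀ k ≤ N, μ ≤ a * (C k).1 - b * (C k).2 ∧
      a * (C k).1 - b * (C k).2 < μ + |a| + |b|)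
    (k₀ k₁ : ℕ) (hk₀ : k₀ ≤ N) (hk₁ : k₁ ≤ N)
    (hV : a * (C k₀).1 - b * (C k₀).2 = μ)
    (hV' : a * (C k₁).1 - b * (C k₁).2 = μ)
    (hne : C k₀ ≠ C k₁)
    (hmin : ∀ k ≤ N, a * (C k).1 - b * (C k).2 = μ → (C k₀).1 ≤ (C k).1)
    (hmax : ∀ k ≤ N, a * (C k).1 - b * (C k).2 = μ → (C k).1 ≤ (C k₁).1) :
    {v : ℤ × ℤ | IsUpperHullVertex {p | ∃ k ≤ N, C k = p} v ∧
        v.1 < (C k₀).1}.ncard ≤ n ∧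
    {v : ℤ × ℤ | IsUpperHullVertex {p | ∃ k ≤ N, C k = p} v ∧
        (C k₁).1 < v.1}.ncard ≤ n := by
  have hmonoC : ∀ d i, i + d ≤ N → (C i).1 ≤ (C (i + d)).1 ∧ (C i).2 ≤ (C (i + d)).2 ∧
      (C (i + d)).1 + (C (i + d)).2 = (C i).1 + (C i).2 + d := by
    intro d
    induction d with
    | zero => intro i _; simp
    | succ d ih =>
      intro i hi
      obtain ⟨h1, h2, h3⟩ := ih i (by omega)
      have hs := hstep (i + d) (by omega)
      simp only [Set.mem_insert_iff, Set.mem_singleton_iff, Prod.ext_iff, Prod.fst_sub,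
        Prod.snd_sub] at hs
      rw [← add_assoc]
      push_cast
      omega
  have hsum : ∀ i j, i ≤ N → j ≤ N →
      (C j).1 + (C j).2 - ((C i).1 + (C i).2) = (j : ℤ) - i := by
    intro i j hi hj
    rcases le_total i j with h | h
    · obtain ⟨d, rfl⟩ := Nat.exists_eq_add_of_le h
      have := (hmonoC d i hj).2.2
      push_cast
      linarith
    · obtain ⟨d, rfl⟩ := Nat.exists_eq_add_of_le h
      have := (hmonoC d j hi).2.2
      push_cast
      linarith
  have hmono : ∀ p ∈ {p | ∃ k ≤ N, C k = p}, ∀ p' ∈ {p | ∃ k ≤ N, C k = p},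
      p.1 + p.2 ≤ p'.1 + p'.2 → p.1 ≤ p'.1 ∧ p.2 ≤ p'.2 := by
    rintro _ ⟨i, hi, rfl⟩ _ ⟨j, hj, rfl⟩ h
    have hs := hsum i j hi hj
    obtain ⟨d, rfl⟩ := Nat.exists_eq_add_of_le (by omega : i ≤ j)
    exact ⟨(hmonoC d i hj).1, (hmonoC d i hj).2.1⟩
  have hPr : ∀ p ∈ {p | ∃ k ≤ N, C k = p},
      μ ≤ a * p.1 - b * p.2 ∧ a * p.1 - b * p.2 < μ + (a + b) := by
    rintro _ ⟨i, hi, rfl⟩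
    have := hin i hi
    rw [abs_of_pos ha, abs_of_pos (ha.trans hb)] at this
    exact ⟨this.1, by linarith⟩
  have hfin : {p | ∃ k ≤ N, C k = p}.Finite :=
    ((Set.finite_Iic N).image C).subset (by rintro _ ⟨k, hk, rfl⟩; exact ⟨k, hk, rfl⟩)
  -- each diagonal `x + y = const` carries exactly one point of the standard line
  have huniq : ∀ p : ℤ × ℤ, μ ≤ a * p.1 - b * p.2 → a * p.1 - b * p.2 < μ + (a + b) →
      ∀ k ≤ N, p.1 + p.2 = (C k).1 + (C k).2 → p ∈ {p | ∃ k ≤ N, C k = p} := by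
    intro p h1 h2 k hk hs
    refine ⟨k, hk, ?_⟩
    have h3 := hPr (C k) ⟨k, hk, rfl⟩
    have hd : a * p.1 - b * p.2 - (a * (C k).1 - b * (C k).2) =
        (a + b) * (p.1 - (C k).1) := by linear_combination (-b) * hs
    have hlt : p.1 - (C k).1 < 1 := by
      by_contra! h
      nlinarith
    have hgt : -1 < p.1 - (C k).1 := by
      by_contra! h
      nlinarith
    ext <;> omega
  constructor
  · have := side_bound (σ := -1) (T := k₀) ha hb (Or.inr rfl) u n hu hpa hqb hfin
      ⟨k₀, hk₀, rfl⟩ hV hPr hmono ?_ ?_ ?_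
    · convert this using 5
      constructor <;> intro h <;> linarith
    · rintro p h1 h2 ⟨h3, h4⟩
      obtain ⟨d, hd⟩ := Int.eq_ofNat_of_zero_le h3
      have := hsum k₀ (k₀ - d) hk₀ (by omega)
      refine huniq p h1 h2 (k₀ - d) (by omega) ?_
      rw [Nat.cast_sub (by omega)] at this
      linarith
    · rintro _ ⟨k, hk, rfl⟩
      have := hsum k₀ k hk₀ hk
      omega
    · rintro _ ⟨k, hk, rfl⟩ h
      have := hmin k hk h
      linarith
  · have := side_bound (σ := 1) (T := N - k₁) ha hb (Or.inl rfl) u n hu hpa hqb hfin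
      ⟨k₁, hk₁, rfl⟩ hV' hPr hmono ?_ ?_ ?_
    · convert this using 5
      constructor <;> intro h <;> linarith
    · rintro p h1 h2 ⟨h3, h4⟩
      obtain ⟨d, hd⟩ := Int.eq_ofNat_of_zero_le h3
      have := hsum k₁ (k₁ + d) hk₁ (by omega)
      refine huniq p h1 h2 (k₁ + d) (by omega) ?_
      push_cast at this
      linarith
    · rintro _ ⟨k, hk, rfl⟩
      have := hsum k₁ k hk₁ hk
      omega
    · rintro _ ⟨k, hk, rfl⟩ h
      have := hmax k hk h
      linarith
end

section
/- Let N ≥ 1, let f : ℤ/Nℤ → {0, 1, 2} be a labeling of the vertices of a cycle of length N, and for labels i, j let n_i = #{v : f(v) = i} and n_{ij} = #{k : f(k) = i and f(k+1) = j}. Let K ≥ 0 be a real number and assume n₀₀ ≤ K·(n₁ + n₂) and n₂ ≤ 2·n₂₂. Then N ≤ (K + 3)·(n₁ + 2·n₂₂). (Applied with K the maximal number of digital edges contained in a maximal segment, which is O(log m) for a digital convex polygon in an m × m grid, labels 2 for vertices of supporting edges, 1 for other upper-leaning-point vertices and 0 for the rest, this gives n_e(Γ)/Ω(log m) ≤ n₁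 + 2·n₂₂, so the polygon has at least n_e(Γ)/Ω(log m) maximal segments.) -/
/-!
The edges `(k, k + 1)` of the cycle are in bijection with its vertices, so there are `N` of them.
An edge that is not a 00-edge has an endpoint with a nonzero label, and each such vertex is an
endpoint of at most two edges; hence `N ≤ n₀₀ + 2 (n₁ + n₂)` (`card_le_zero_zero_add`).
The hypotheses then give `N ≤ (K + 2) (n₁ + n₂) ≤ (K + 2) (n₁ + 2 n₂₂)`,
which is stronger than the claim because `n₁ + 2 n₂₂ ≥ 0`.
-/

/-- Translation by `1` is a bijection, so a label occurs as often on heads of edges as on vertices. -/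
lemma card_filter_succ (N : ℕ) [NeZero N] (f : ZMod N → Fin 3) (i : Fin 3) :
    (Finset.univ.filter fun k : ZMod N => f (k + 1) = i).card =
      (Finset.univ.filter fun v : ZMod N => f v = i).card := by
  refine Finset.card_equiv (Equiv.addRight 1) fun k => ?_
  simp

lemma card_le_zero_zero_add (N : ℕ) [NeZero N] (f : ZMod N → Fin 3) :
    N ≤ (Finset.univ.filter fun k : ZMod N => f k = 0 ∧ f (k + 1) = 0).card +
      2 * ((Finset.univ.filter fun v : ZMod N => f v = 1).card +
        (Finset.univ.filter fun v : ZMod N => f v = 2).card) := by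
  classical
  -- Each edge is a 00-edge, or its tail or its head carries the label 1 or 2.
  have hcover : (Finset.univ : Finset (ZMod N)) ⊆
      (Finset.univ.filter fun k : ZMod N => f k = 0 ∧ f (k + 1) = 0) ∪
      (((Finset.univ.filter fun k : ZMod N => f k = 1) ∪
        (Finset.univ.filter fun k : ZMod N => f k = 2)) ∪
      ((Finset.univ.filter fun k : ZMod N => f (k + 1) = 1) ∪
        (Finset.univ.filter fun k : ZMod N => f (k + 1) = 2))) := by
    intro k _
    simp only [Finset.mem_union, Finset.mem_filter, Finset.mem_univ, true_and]
    generalize f k = a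
    generalize f (k + 1) = b
    revert a b
    decide
  have hcard := Finset.card_le_card hcover
  rw [Finset.card_univ, ZMod.card] at hcard
  refine hcard.trans ?_
  refine (Finset.card_union_le _ _).trans (Nat.add_le_add_left ?_ _)
  refine (Finset.card_union_le _ _).trans ?_
  rw [two_mul]
  refine Nat.add_le_add (Finset.card_union_le _ _) ((Finset.card_union_le _ _).trans ?_)
  rw [card_filter_succ, card_filter_succ]

/-- Counting argument on a labeled cycle: if the number `n₀₀` of 00-edges is at most
`K·(n₁ + n₂)` and `n₂ ≤ 2·n₂₂`, then the length `N` of the cycle is at most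
`(K + 3)·(n₁ + 2·n₂₂)`. -/
theorem labeled_cycle_counting
    (N : ℕ) [NeZero N] (f : ZMod N → Fin 3) (K : ℝ) (hK : 0 ≤ K)
    (h00 : ({k : ZMod N | f k = 0 ∧ f (k+1) = 0}.ncard : ℝ) ≤
      K * (({v : ZMod N | f v = 1}.ncard : ℝ) + ({v : ZMod N | f v = 2}.ncard : ℝ)))
    (h2 : {v : ZMod N | f v = 2}.ncard ≤
      2 * {k : ZMod N | f k = 2 ∧ f (k+1) = 2}.ncard) :
    (N : ℝ) ≤ (K + 3) * (({v : ZMod N | f v = 1}.ncard : ℝ) +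
      2 * ({k : ZMod N | f k = 2 ∧ f (k+1) = 2}.ncard : ℝ)) := by
  classical
  simp only [← Nat.card_coe_set_eq, Set.coe_ofPred, Nat.card_eq_fintype_card,
    Fintype.card_subtype] at h00 h2 ⊢
  have key := card_le_zero_zero_add N f
  have key' : (N : ℝ) ≤ (Finset.univ.filter fun k : ZMod N => f k = 0 ∧ f (k + 1) = 0).card +
      2 * ((Finset.univ.filter fun v : ZMod N => f v = 1).card +
        (Finset.univ.filter fun v : ZMod N => f v = 2).card) := by
    exact_mod_cast key
  rify at h2
  have hn₁ : (0 : ℝ) ≤ (Finset.univ.filter fun v : ZMod N => f v = 1).card := Nat.cast_nonneg _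
  have hn₂ : (0 : ℝ) ≤ (Finset.univ.filter fun v : ZMod N => f v = 2).card := Nat.cast_nonneg _
  have hK2 := mul_le_mul_of_nonneg_left h2 hK
  nlinarith
end

section
/- Let N ≥ 1, let f : ℤ/Nℤ → {0, 1, 2} be a labeling of the vertices of a cycle of length N, and let L : ℤ/Nℤ → ℝ assign a nonnegative length L(k) to the edge (k, k+1). Let n₁ = #{v : f(v) = 1} and n₂₂ = #{k : f(k) = 2 and f(k+1) = 2}. Let μ ≥ 0 and suppose that L(k) ≥ μ/3 whenever f(k) = 2 and f(k+1) = 2, and that L(v−1) + L(v) ≥ μ/4 whenever f(v) = 1. Then Σ_{k ∈ ℤ/Nℤ} L(k) ≥ (1/8)·(n₁ + 2·n₂₂)·μ. (Applied to a digital convex polygon with edge lengths L, labels as before and μ the length of its smallest maximal segment, this shows the perimeter satisfies Per(Γ) ≥ (1/8)(n₁ + 2n₂₂)·min_l ℒ¹(MS_l), whence the smallest maximal segment has length at most Ω(log m)·Per(Γ)/n_e(Γ).) -/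
/-!
The proof is a charging argument. Every edge gives half of its length to each of its endpoints
labelled 1, and a 22-edge, which has no such endpoint, keeps its length. A 1-vertex then receives
at least `μ/8`, and a 22-edge keeps at least `μ/3 ≥ 2 * μ/8`. No edge gives away more than its
length, so summing over the cycle gives the bound.
-/

/-- Length argument on a labeled cycle with edge lengths: if every 22-edge has length
at least `μ/3` and the two edges at every 1-vertex have total length at least `μ/4`,
then the total length is at least `(1/8)·(n₁ + 2·n₂₂)·μ`. -/
theorem labeled_cycle_length_bound
    (N : ℕ) [NeZero N] (f : ZMod N → Fin 3) (L : ZMod N → ℝ)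
    (hL : ∀ k, 0 ≤ L k) (μ : ℝ) (hμ : 0 ≤ μ)
    (h22 : ∀ k : ZMod N, f k = 2 → f (k+1) = 2 → μ / 3 ≤ L k)
    (h1 : ∀ v : ZMod N, f v = 1 → μ / 4 ≤ L (v-1) + L v) :
    (1/8 : ℝ) * (({v : ZMod N | f v = 1}.ncard : ℝ) +
      2 * ({k : ZMod N | f k = 2 ∧ f (k+1) = 2}.ncard : ℝ)) * μ ≤
    ∑ k : ZMod N, L k := by
  classical
  have card_eq : ∀ (p : ZMod N → Prop) [DecidablePred p],
      ({k | p k}.ncard : ℝ) = ∑ k, if p k then (1 : ℝ) else 0 := by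
    intro p _
    rw [Set.ncard_eq_toFinset_card', Finset.sum_boole]
    simp
  -- Indexing by the right endpoint instead of the edge turns `L k` into `L (v - 1)`.
  have shift : ∑ k, (if f (k+1) = 1 then L k else 0) =
      ∑ v, (if f v = 1 then L (v-1) else 0) := by
    rw [← Equiv.sum_comp (Equiv.addRight (1 : ZMod N))
      (fun v => if f v = 1 then L (v-1) else 0)]
    simp
  have edge : ∑ k, ((if f k = 2 ∧ f (k+1) = 2 then (1 : ℝ) else 0) * (μ / 4)
      + (if f (k+1) = 1 then L k else 0) * (1/2)
      + (if f k = 1 then L k else 0) * (1/2)) ≤ ∑ k, L k := by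
    refine Finset.sum_le_sum fun k _ => ?_
    have := hL k
    by_cases h : f k = 2 ∧ f (k+1) = 2
    · have := h22 k h.1 h.2
      have h21 : (2 : Fin 3) ≠ 1 := by decide
      rw [if_pos h, h.1, h.2, if_neg h21]
      linarith
    · rw [if_neg h]
      split_ifs <;> linarith
  have vertex : ∑ v, (if f v = 1 then (1 : ℝ) else 0) * (μ / 4) ≤
      ∑ v, ((if f v = 1 then L (v-1) else 0) + (if f v = 1 then L v else 0)) := by
    refine Finset.sum_le_sum fun v _ => ?_
    split_ifs with h
    · have := h1 v h
      linarith
    · simp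
  rw [card_eq, card_eq]
  simp only [Finset.sum_add_distrib, ← Finset.sum_mul] at edge vertex
  rw [shift] at edge
  linarith
end

section
/- Let a, b be coprime integers with 0 < a ≤ b, let μ be an integer, and let C : {0, …, N} → ℤ² be a path with C(k+1) − C(k) ∈ {(1,0), (0,1)} for all k, all of whose points lie in the standard line D(a,b,μ). Suppose C visits at least two upper leaning points (points of remainder μ), and let U = C(k₀) and U′ = C(k₁) be the first and last such points. Then U′ − U = f·(b, a) for some integer f ≥ 1, and the number of steps N of the path satisfies f·(a+b) ≤ N ≤ (f+2)·(a+b) − 2. In particular f·(a+b) ≤ N ≤ 3·f·(a+b) and N/3 ≤ f·(a+b) ≤ N. (The ℒ¹-length of a maximal segment is between one and three times the ℒ¹-length of its supporting edge, which consists of f patterns (a,b).) -/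
/-!
Each step raises `x + y` by one, so the `k`-th point of the path satisfies
`x + y = const + k`, and its remainder is `a x - b y = (a + b) x - b (x + y)`. Modulo `a + b`
the remainder therefore depends only on `k` modulo `a + b`, and since the points of the standard
line have remainders in a window of length `a + b`, indices differing by `a + b` carry
the same remainder (`remainder_eq_of_sum_eq_add_period`).

Coprimality gives `U' - U = f (b, a)`, so `k₁ - k₀ = f (a + b)`. If `k₀ ≥ a + b`, the point of
index `k₀ - (a + b)` would be an earlier upper leaning point; hence `k₀ ≤ a + b - 1`, and likewise
`N - k₁ ≤ a + b - 1`. Adding the three lengths gives the bounds.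
-/

lemma fst_add_snd_of_unit_steps (N : ℕ) (C : ℕ → ℤ × ℤ)
    (hstep : ∀ k < N, C (k+1) - C k ∈ ({(1,0), (0,1)} : Set (ℤ × ℤ))) :
    ∀ k ≤ N, (C k).1 + (C k).2 = (C 0).1 + (C 0).2 + k := by
  intro k
  induction k with
  | zero => intro _; simp
  | succ n ih =>
    intro hn
    have hprev := ih (by omega)
    have hs := hstep n (by omega)
    simp only [Set.mem_insert_iff, Set.mem_singleton_iff, Prod.ext_iff, Prod.fst_sub,
      Prod.snd_sub] at hs
    push_cast
    omega

/-- Two points of `D(a,b,μ)` whose values of `x + y` differ by `a + b` have the same remainder: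
the remainders agree modulo `a + b` and both lie in a window of that length. -/
lemma remainder_eq_of_sum_eq_add_period (a b μ x y x' y' : ℤ)
    (hsum : x' + y' = x + y + (a + b))
    (h : μ ≤ a * x - b * y ∧ a * x - b * y < μ + (a + b))
    (h' : μ ≤ a * x' - b * y' ∧ a * x' - b * y' < μ + (a + b)) :
    a * x' - b * y' = a * x - b * y := by
  have hdvd : (a + b) ∣ (a * x' - b * y') - (a * x - b * y) := by
    refine ⟨x' - x - b, ?_⟩
    have hy : y' = x + y + (a + b) - x' := by linarith
    subst hy
    ring
  have hz := Int.eq_zero_of_abs_lt_dvd hdvd (by rw [abs_lt]; constructor <;> linarith)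
  linarith

/-- The `ℒ¹`-length `N` of a DSS of characteristics `(a,b,μ)` whose extremal upper
leaning points `C k₀` and `C k₁` differ by `f` patterns `(a,b)` satisfies
`f·(a+b) ≤ N ≤ (f+2)·(a+b) − 2`; in particular `N/3 ≤ f·(a+b) ≤ N ≤ 3·f·(a+b)`. -/
theorem maximal_segment_vs_supporting_edge_length
    (a b : ℤ) (hab : IsCoprime a b) (ha : 0 < a) (hb : a ≤ b) (μ : ℤ)
    (N : ℕ) (C : ℕ → ℤ × ℤ)
    (hstep : ∀ k < N, C (k+1) - C k ∈ ({(1,0), (0,1)} : Set (ℤ × ℤ)))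
    (hin : ∀ k ≤ N, μ ≤ a * (C k).1 - b * (C k).2 ∧
      a * (C k).1 - b * (C k).2 < μ + |a| + |b|)
    (k₀ k₁ : ℕ) (hk₀ : k₀ ≤ N) (hk₁ : k₁ ≤ N) (hlt : k₀ < k₁)
    (h0 : a * (C k₀).1 - b * (C k₀).2 = μ)
    (h1 : a * (C k₁).1 - b * (C k₁).2 = μ)
    (hfirst : ∀ k ≤ N, a * (C k).1 - b * (C k).2 = μ → k₀ ≤ k)
    (hlast : ∀ k ≤ N, a * (C k).1 - b * (C k).2 = μ → k ≤ k₁) :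
    ∃ f : ℤ, 1 ≤ f ∧ C k₁ - C k₀ = (f * b, f * a) ∧
      f * (a + b) ≤ (N : ℤ) ∧ (N : ℤ) ≤ (f + 2) * (a + b) - 2 ∧
      (N : ℤ) ≤ 3 * (f * (a + b)) := by
  have hbpos : 0 < b := by linarith
  rw [abs_of_pos ha, abs_of_pos hbpos] at hin
  have hsum := fst_add_snd_of_unit_steps N C hstep
  have hs0 := hsum k₀ hk₀
  have hs1 := hsum k₁ hk₁
  obtain ⟨f, hf⟩ : b ∣ (C k₁).1 - (C k₀).1 := by
    refine hab.symm.dvd_of_dvd_mul_left ⟨(C k₁).2 - (C k₀).2, ?_⟩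
    linarith
  have hf' : (C k₁).2 - (C k₀).2 = f * a := by
    apply mul_left_cancel₀ hbpos.ne'
    linear_combination a * hf + h0 - h1
  have hlen : (k₁ : ℤ) - k₀ = f * (a + b) := by linarith
  have hfpos : 1 ≤ f := by
    have hpos : 0 < f * (a + b) := by rw [← hlen]; omega
    exact pos_of_mul_pos_left hpos (by linarith)
  obtain ⟨n, hn⟩ := Int.eq_ofNat_of_zero_le (show 0 ≤ a + b by linarith)
  have hstart : (k₀ : ℤ) ≤ a + b - 1 := by
    by_contra hc
    have hle : k₀ - n ≤ N := by omega
    have hr := remainder_eq_of_sum_eq_add_period a b μ (C (k₀ - n)).1 (C (k₀ - n)).2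
      (C k₀).1 (C k₀).2
      (by rw [hs0, hsum _ hle]; omega)
      (by have := hin _ hle; constructor <;> linarith)
      (by have := hin _ hk₀; constructor <;> linarith)
    have := hfirst _ hle (by linarith)
    omega
  have hend : (N : ℤ) - k₁ ≤ a + b - 1 := by
    by_contra hc
    have hle : k₁ + n ≤ N := by omega
    have hr := remainder_eq_of_sum_eq_add_period a b μ (C k₁).1 (C k₁).2
      (C (k₁ + n)).1 (C (k₁ + n)).2
      (by rw [hs1, hsum _ hle]; push_cast; omega)
      (by have := hin _ hk₁; constructor <;> linarith)
      (by have := hin _ hle; constructor <;> linarith)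
    have := hlast _ hle (by linarith)
    omega
  refine ⟨f, hfpos, ?_, ?_, ?_, ?_⟩
  · ext
    · simpa [mul_comm] using hf
    · simpa using hf'
  · omega
  · linarith
  · nlinarith
end

section
/- Let a, b be coprime integers with 0 < a ≤ b, let μ be an integer, and let C : {0, …, N} → ℤ² be a path with C(k+1) − C(k) ∈ {(1,0), (0,1)} for all k, all of whose points lie in the standard line D(a,b,μ). If C visits at least one upper leaning point (point of remainder μ), and k₀ and k₁ are the smallest and largest indices of such points, then k₀ ≤ a + b − 1 and N − k₁ ≤ a + b − 1. (A digital straight segment of characteristics (a,b,μ) extends at most a+b−1 points beyond its extremal upper leaning points.) -/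
/-!
Each step `(1,0)` or `(0,1)` changes the remainder by `a` or by `-b`, that is, by `a` modulo
`a + b`. Hence remainders of points `a + b` steps apart are congruent modulo `a + b`, and as all
remainders lie in a window of length `a + b`, they are equal. A path going `a + b` or more steps
beyond an extremal upper leaning point would thus meet a further upper leaning point.
-/

theorem dvd_remainder_sub (a b : ℤ) (N : ℕ) (C : ℕ → ℤ × ℤ)
    (hstep : ∀ k < N, C (k+1) - C k ∈ ({(1,0), (0,1)} : Set (ℤ × ℤ))) (k j : ℕ)
    (hj : k + j ≤ N) :
    a + b ∣ (a * (C (k + j)).1 - b * (C (k + j)).2) - (a * (C k).1 - b * (C k).2) - j * a := by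
  induction j with
  | zero => simp
  | succ j ih =>
    obtain ⟨c, hc⟩ := ih (by omega)
    have hs := hstep (k + j) (by omega)
    simp only [Set.mem_insert_iff, Set.mem_singleton_iff, Prod.ext_iff, Prod.fst_sub,
      Prod.snd_sub, add_assoc] at hs
    push_cast
    rcases hs with ⟨hx, hy⟩ | ⟨hx, hy⟩
    · exact ⟨c, by linear_combination hc + a * hx - b * hy⟩
    · exact ⟨c - 1, by linear_combination hc + a * hx - b * hy⟩

/-- Along a path inside a standard line, the remainder is periodic with period `a + b`. -/
theorem remainder_periodic (a b : ℤ) (ha : 0 < a) (hb : a ≤ b) (μ : ℤ)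
    (N : ℕ) (C : ℕ → ℤ × ℤ)
    (hstep : ∀ k < N, C (k+1) - C k ∈ ({(1,0), (0,1)} : Set (ℤ × ℤ)))
    (hin : ∀ k ≤ N, μ ≤ a * (C k).1 - b * (C k).2 ∧
      a * (C k).1 - b * (C k).2 < μ + |a| + |b|)
    (k n : ℕ) (hn : (n : ℤ) = a + b) (hk : k + n ≤ N) :
    a * (C (k + n)).1 - b * (C (k + n)).2 = a * (C k).1 - b * (C k).2 := by
  have h := dvd_remainder_sub a b N C hstep k n hk
  rw [hn] at h
  have h' := (dvd_sub_left (Dvd.intro a rfl)).1 h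
  have e1 := hin k (by omega)
  have e2 := hin (k + n) hk
  rw [abs_of_pos ha, abs_of_pos (by omega : 0 < b)] at e1 e2
  have := Int.eq_zero_of_abs_lt_dvd h' (by rw [abs_lt]; constructor <;> linarith)
  linarith

/-- A DSS of characteristics `(a,b,μ)` extends at most `a+b−1` points beyond its
extremal upper leaning points on either side. -/
theorem dss_extension_beyond_leaning_points
    (a b : ℤ) (hab : IsCoprime a b) (ha : 0 < a) (hb : a ≤ b) (μ : ℤ)
    (N : ℕ) (C : ℕ → ℤ × ℤ)
    (hstep : ∀ k < N, C (k+1) - C k ∈ ({(1,0), (0,1)} : Set (ℤ × ℤ)))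
    (hin : ∀ k ≤ N, μ ≤ a * (C k).1 - b * (C k).2 ∧
      a * (C k).1 - b * (C k).2 < μ + |a| + |b|)
    (k₀ k₁ : ℕ) (hk₀ : k₀ ≤ N) (hk₁ : k₁ ≤ N)
    (h0 : a * (C k₀).1 - b * (C k₀).2 = μ)
    (h1 : a * (C k₁).1 - b * (C k₁).2 = μ)
    (hfirst : ∀ k ≤ N, a * (C k).1 - b * (C k).2 = μ → k₀ ≤ k)
    (hlast : ∀ k ≤ N, a * (C k).1 - b * (C k).2 = μ → k ≤ k₁) :
    (k₀ : ℤ) ≤ a + b - 1 ∧ (N : ℤ) - (k₁ : ℤ) ≤ a + b - 1 := by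
  obtain ⟨n, hn⟩ := Int.eq_ofNat_of_zero_le (by omega : 0 ≤ a + b)
  have key := fun k => remainder_periodic a b ha hb μ N C hstep hin k n hn.symm
  constructor
  · by_contra hcon
    obtain ⟨m, rfl⟩ : ∃ m, k₀ = m + n := ⟨k₀ - n, by omega⟩
    have := hfirst m (by omega) ((key m hk₀).symm.trans h0)
    omega
  · by_contra hcon
    have := hlast (k₁ + n) (by omega) ((key k₁ (by omega)).trans h1)
    omega
end

section
/- Let m > 0 be a real number, e ≥ 3, and let v : ℤ/eℤ → ℝ² be points all lying in the square [0,m] × [0,m] that are in strictly convex position in cyclic order, i.e., for all indices i < j < k (as representatives in {0,…,e−1}) the determinant det(v(j) − v(i), v(k) − v(i)) is strictly positive. Then the ℓ¹-perimeter of the polygon satisfies Σ_{k ∈ ℤ/eℤ} ‖v(k+1) − v(k)‖₁ ≤ 4m. (The ℒ¹-perimeter of a convex polygon inscribed in an m × m square is at most 4m.) -/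
/-!
The two coordinates are handled separately: each coordinate function `f`, read around the polygon,
has cyclic total variation at most `2m`.

For `i < j < k < l` the diagonals `v i v k` and `v j v l` of the convex quadrilateral cross, so
their projections to either axis, the intervals spanned by `f i, f k` and by `f j, f l`, meet
(`intervals_meet`, applied to the affine dependence of the four points whose coefficients are the
areas of the four triangles). Crossing of these intervals bounds the variation
(`cyclic_variation_le`): appending a value `f (n+1)` to the cycle `f 0, …, f n` raises the
cyclic variation by twice the distance from `f (n+1)` to the interval spanned by `f 0` and `f n`.
If that distance is positive, say `f (n+1)` lies above, then the crossing condition for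
`0 < j < n < n+1` forces `max (f 0) (f n)` to be the maximum of the old values, so the increase
is paid for by the growth of the range.
-/

/-- If a point is a positive combination both of `p, r` and of `q, s`, with the same total weight,
then the intervals spanned by `p, r` and by `q, s` meet; this is one half of that conclusion. -/
lemma min_le_max_of_combination {a b c d p q r s : ℝ} (ha : 0 < a) (hb : 0 < b) (hc : 0 < c)
    (hd : 0 < d) (hsum : a + c = b + d) (h : a * p + c * r = b * q + d * s) :
    min q s ≤ max p r := by
  by_contra! hlt
  have h1 : a * p ≤ a * max p r := by gcongr; exact le_max_left _ _
  have h2 : c * r ≤ c * max p r := by gcongr; exact le_max_right _ _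
  have h3 : b * min q s ≤ b * q := by gcongr; exact min_le_left _ _
  have h4 : d * min q s ≤ d * s := by gcongr; exact min_le_right _ _
  have h5 : (a + c) * max p r < (a + c) * min q s := by gcongr
  have h6 : (a + c) * min q s = (b + d) * min q s := by rw [hsum]
  linarith

lemma intervals_meet {a b c d p q r s : ℝ} (ha : 0 < a) (hb : 0 < b) (hc : 0 < c)
    (hd : 0 < d) (hsum : a + c = b + d) (h : a * p + c * r = b * q + d * s) :
    min q s ≤ max p r ∧ min p r ≤ max q s :=
  ⟨min_le_max_of_combination ha hb hc hd hsum h,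
    min_le_max_of_combination hb ha hd hc hsum.symm h.symm⟩

/-- The cyclic total variation of `f 0, …, f n` is at most twice the length of an interval
containing these values, provided the diagonals from `0` cross in projection. -/
lemma cyclic_variation_le (f : ℕ → ℝ) (n : ℕ)
    (hf : ∀ j k, 0 < j → j < k → k < n →
      min (f j) (f (k + 1)) ≤ max (f 0) (f k) ∧ min (f 0) (f k) ≤ max (f j) (f (k + 1)))
    (lo hi : ℝ) (hlo : ∀ i ≤ n, lo ≤ f i) (hhi : ∀ i ≤ n, f i ≤ hi) :
    ∑ i ∈ Finset.range n, |f (i + 1) - f i| + |f 0 - f n| ≤ 2 * (hi - lo) := by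
  induction n generalizing lo hi with
  | zero =>
    have h1 := hlo 0 le_rfl
    have h2 := hhi 0 le_rfl
    simp
    linarith
  | succ n ih =>
    have ih' := ih (fun j k hj hjk hk => hf j k hj hjk (by omega))
    rw [Finset.sum_range_succ]
    have hl : ∀ i ≤ n, lo ≤ f i := fun i hi' => hlo i (by omega)
    have hh : ∀ i ≤ n, f i ≤ hi := fun i hi' => hhi i (by omega)
    have hln := hlo (n + 1) le_rfl
    have hhn := hhi (n + 1) le_rfl
    rcases lt_or_ge (max (f 0) (f n)) (f (n + 1)) with hab | hab
    · -- the new value lies above `f 0` and `f n`, which then dominate all old values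
      have key : ∀ i ≤ n, f i ≤ max (f 0) (f n) := by
        intro i hi'
        rcases Nat.eq_zero_or_pos i with rfl | hpos
        · exact le_max_left _ _
        rcases hi'.eq_or_lt with rfl | hlt
        · exact le_max_right _ _
        rcases min_le_iff.1 (hf i n hpos hlt (by omega)).1 with h | h
        · exact h
        · exact absurd h (not_le.2 hab)
      have := ih' lo (max (f 0) (f n)) hl key
      have e1 : |f (n + 1) - f n| = f (n + 1) - f n :=
        abs_of_pos (by linarith [le_max_right (f 0) (f n)])
      have e2 : |f 0 - f (n + 1)| = f (n + 1) - f 0 := by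
        rw [abs_sub_comm]; exact abs_of_pos (by linarith [le_max_left (f 0) (f n)])
      have e3 : |f 0 - f n| = 2 * max (f 0) (f n) - f 0 - f n := by
        rcases le_total (f 0) (f n) with h | h
        · rw [max_eq_right h, abs_of_nonpos (by linarith)]; ring
        · rw [max_eq_left h, abs_of_nonneg (by linarith)]; ring
      linarith
    rcases lt_or_ge (f (n + 1)) (min (f 0) (f n)) with hbe | hbe
    · have key : ∀ i ≤ n, min (f 0) (f n) ≤ f i := by
        intro i hi'
        rcases Nat.eq_zero_or_pos i with rfl | hpos
        · exact min_le_left _ _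
        rcases hi'.eq_or_lt with rfl | hlt
        · exact min_le_right _ _
        rcases le_max_iff.1 (hf i n hpos hlt (by omega)).2 with h | h
        · exact h
        · exact absurd h (not_le.2 hbe)
      have := ih' (min (f 0) (f n)) hi key hh
      have e1 : |f (n + 1) - f n| = f n - f (n + 1) := by
        rw [abs_sub_comm]; exact abs_of_pos (by linarith [min_le_right (f 0) (f n)])
      have e2 : |f 0 - f (n + 1)| = f 0 - f (n + 1) :=
        abs_of_pos (by linarith [min_le_left (f 0) (f n)])
      have e3 : |f 0 - f n| = f 0 + f n - 2 * min (f 0) (f n) := by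
        rcases le_total (f 0) (f n) with h | h
        · rw [min_eq_left h, abs_of_nonpos (by linarith)]; ring
        · rw [min_eq_right h, abs_of_nonneg (by linarith)]; ring
      linarith
    · -- the new value lies between `f 0` and `f n`, so the variation is unchanged
      have := ih' lo hi hl hh
      have e3 : |f (n + 1) - f n| + |f 0 - f (n + 1)| = |f 0 - f n| := by
        rcases le_total (f 0) (f n) with h | h
        · rw [max_eq_right h] at hab
          rw [min_eq_left h] at hbe
          rw [abs_of_nonpos (by linarith), abs_of_nonpos (by linarith),
            abs_of_nonpos (by linarith)]
          ring
        · rw [max_eq_left h] at hab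
          rw [min_eq_right h] at hbe
          rw [abs_of_nonneg (by linarith), abs_of_nonneg (by linarith),
            abs_of_nonneg (by linarith)]
          ring
      linarith

lemma sum_zmod_eq_sum_range (e : ℕ) [NeZero e] (g : ZMod e → ℝ) :
    ∑ k : ZMod e, g k = ∑ i ∈ Finset.range e, g (i : ZMod e) := by
  refine Finset.sum_nbij' (fun k => k.val) (fun i => (i : ZMod e)) ?_ ?_ ?_ ?_ ?_
  · intro k _; simpa using ZMod.val_lt k
  · intro i _; simp
  · intro k _; simp
  · intro i hi; exact ZMod.val_cast_of_lt (by simpa using hi)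
  · intro k _; simp

/-- The `ℓ¹`-perimeter of a convex polygon inscribed in an `m × m` square is at most
`4m`. -/
theorem convex_polygon_l1_perimeter_le
    (m : ℝ) (hm : 0 < m) (e : ℕ) [NeZero e] (he : 3 ≤ e)
    (v : ZMod e → ℝ × ℝ)
    (hsq : ∀ k : ZMod e, (v k).1 ∈ Set.Icc (0:ℝ) m ∧ (v k).2 ∈ Set.Icc (0:ℝ) m)
    (hconv : ∀ i j k : ℕ, i < j → j < k → k < e →
      0 < (v (j : ZMod e) - v (i : ZMod e)).1 * (v (k : ZMod e) - v (i : ZMod e)).2 -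
          (v (j : ZMod e) - v (i : ZMod e)).2 * (v (k : ZMod e) - v (i : ZMod e)).1) :
    ∑ k : ZMod e, (|(v (k+1)).1 - (v k).1| + |(v (k+1)).2 - (v k).2|) ≤ 4 * m := by
  obtain ⟨n, rfl⟩ : ∃ n, e = n + 1 := ⟨e - 1, by omega⟩
  have wrap : ((n : ℕ) : ZMod (n + 1)) + 1 = ((0 : ℕ) : ZMod (n + 1)) := by
    have := ZMod.natCast_self (n + 1)
    push_cast at this ⊢
    exact this
  have hx := cyclic_variation_le (fun i : ℕ => (v (i : ZMod (n + 1))).1) n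
    (fun j k hj hjk hk => by
      -- the weights are the areas of the triangles omitting one vertex of the quadrilateral
      refine intervals_meet (hconv j k (k + 1) hjk (by omega) (by omega))
        (hconv 0 k (k + 1) (by omega) (by omega) (by omega))
        (hconv 0 j (k + 1) (by omega) (by omega) (by omega))
        (hconv 0 j k (by omega) (by omega) (by omega)) ?_ ?_ <;>
      · simp only [Prod.fst_sub, Prod.snd_sub]
        ring)
    0 m (fun i _ => (hsq i).1.1) (fun i _ => (hsq i).1.2)
  have hy := cyclic_variation_le (fun i : ℕ => (v (i : ZMod (n + 1))).2) n
    (fun j k hj hjk hk => by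
      refine intervals_meet (hconv j k (k + 1) hjk (by omega) (by omega))
        (hconv 0 k (k + 1) (by omega) (by omega) (by omega))
        (hconv 0 j (k + 1) (by omega) (by omega) (by omega))
        (hconv 0 j k (by omega) (by omega) (by omega)) ?_ ?_ <;>
      · simp only [Prod.fst_sub, Prod.snd_sub]
        ring)
    0 m (fun i _ => (hsq i).2.1) (fun i _ => (hsq i).2.2)
  rw [sum_zmod_eq_sum_range, Finset.sum_range_succ, wrap, Finset.sum_add_distrib]
  simp only [Nat.cast_add, Nat.cast_one] at hx hy
  linarith
end

section
/- Let C be a digital curve with DSS predicate S, front map F and back map B as defined. For all integers i ≤ j, the following four conditions are equivalent: (1) S(i,j) ∧ ¬S(i,j+1) ∧ ¬S(i−1,j); (2) B(j) = i and F(i) = j; (3) there exists k with i = B(k) and j = F(B(k)); (4) there exists k′ with i = B(F(k′)) and j = F(k′). (These are the four equivalent characterizations of a maximal segment.) -/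
/-!
For `i ≤ j`, monotonicity of the DSS predicate under passing to subsegments makes the front and
back maps adjoint: `IsDSS C i j ↔ j ≤ F i ↔ B j ≤ i`. Rewritten this way, (1) says
`j ≤ F i < j + 1` and `i - 1 < B j ≤ i`, which is (2). The closure identities
`B (F (B k)) = B k` and `F (B (F k)) = F k` then give the equivalence of (2) with (3) and (4).
The geometry of the curve enters only through the monotonicity of `IsDSS`.
-/

/-- `S i j`: the points `C i, …, C j` of the digital curve `C` form a digital straight
segment, i.e. they all lie in a common standard line `D(a,b,μ)`. -/
def IsDSS (C : ℤ → ℤ × ℤ) (i j : ℤ) : Prop :=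
  ∃ a b μ : ℤ, ((a, b) : ℤ × ℤ) ≠ (0, 0) ∧
    ∀ k, i ≤ k → k ≤ j → μ ≤ a * (C k).1 - b * (C k).2 ∧
      a * (C k).1 - b * (C k).2 < μ + |a| + |b|

theorem IsDSS.mono {C : ℤ → ℤ × ℤ} {i j i' j' : ℤ} (h : IsDSS C i j)
    (hi : i ≤ i') (hj : j' ≤ j) : IsDSS C i' j' := by
  obtain ⟨a, b, μ, hab, H⟩ := h
  exact ⟨a, b, μ, hab, fun k hk hk' => H k (hi.trans hk) (hk'.trans hj)⟩

/-- The four equivalent characterizations of a maximal segment `(i,j)`: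
(1) `S(i,j) ∧ ¬S(i,j+1) ∧ ¬S(i−1,j)`; (2) `B j = i ∧ F i = j`;
(3) `∃ k, i = B k ∧ j = F (B k)`; (4) `∃ k', i = B (F k') ∧ j = F k'`. -/
theorem maximal_segment_characterizations
    (C : ℤ → ℤ × ℤ)
    (hC : ∀ k : ℤ, |(C (k+1)).1 - (C k).1| + |(C (k+1)).2 - (C k).2| = 1)
    (hnoF : ∀ i : ℤ, ∃ j, i ≤ j ∧ ¬ IsDSS C i j)
    (hnoB : ∀ j : ℤ, ∃ i, i ≤ j ∧ ¬ IsDSS C i j)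
    (F B : ℤ → ℤ)
    (hF : ∀ i : ℤ, i ≤ F i ∧ IsDSS C i (F i) ∧
      ∀ j, i ≤ j → IsDSS C i j → j ≤ F i)
    (hB : ∀ j : ℤ, B j ≤ j ∧ IsDSS C (B j) j ∧
      ∀ i, i ≤ j → IsDSS C i j → B j ≤ i)
    (i j : ℤ) (hij : i ≤ j) :
    ((IsDSS C i j ∧ ¬ IsDSS C i (j+1) ∧ ¬ IsDSS C (i-1) j) ↔
      (B j = i ∧ F i = j)) ∧
    ((B j = i ∧ F i = j) ↔ (∃ k, i = B k ∧ j = F (B k))) ∧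
    ((∃ k, i = B k ∧ j = F (B k)) ↔ (∃ k', i = B (F k') ∧ j = F k')) := by
  have front : ∀ p q, p ≤ q → (IsDSS C p q ↔ q ≤ F p) := fun p q hpq =>
    ⟨(hF p).2.2 q hpq, fun h => (hF p).2.1.mono le_rfl h⟩
  have back : ∀ p q, p ≤ q → (IsDSS C p q ↔ B q ≤ p) := fun p q hpq =>
    ⟨(hB q).2.2 p hpq, fun h => (hB q).2.1.mono h le_rfl⟩
  have adj : ∀ p q, p ≤ q → (q ≤ F p ↔ B q ≤ p) := fun p q hpq =>
    (front p q hpq).symm.trans (back p q hpq)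
  have le_front : ∀ p, p ≤ F p := fun p => (hF p).1
  have back_le : ∀ q, B q ≤ q := fun q => (hB q).1
  have back_front_back : ∀ k, B (F (B k)) = B k := fun k => by
    have hk : k ≤ F (B k) := (adj _ _ (back_le k)).2 le_rfl
    have hle : B (F (B k)) ≤ B k := (adj _ _ (le_front _)).1 le_rfl
    -- a segment reaching back further from `F (B k) ≥ k` would contain one ending at `k`
    have hge : B k ≤ B (F (B k)) :=
      (hB k).2.2 _ (hle.trans (back_le k)) ((hB _).2.1.mono le_rfl hk)
    exact le_antisymm hle hge
  have front_back_front : ∀ k, F (B (F k)) = F k := fun k => by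
    have hk : B (F k) ≤ k := (adj _ _ (le_front k)).1 le_rfl
    have hge : F k ≤ F (B (F k)) := (adj _ _ (back_le _)).2 le_rfl
    have hle : F (B (F k)) ≤ F k :=
      (hF k).2.2 _ ((le_front k).trans hge) ((hF _).2.1.mono hk le_rfl)
    exact le_antisymm hle hge
  have h23 : (B j = i ∧ F i = j) ↔ ∃ k, i = B k ∧ j = F (B k) := by
    constructor
    · rintro ⟨hb, hf⟩
      exact ⟨j, hb.symm, by rw [hb, hf]⟩
    · rintro ⟨k, rfl, rfl⟩
      exact ⟨back_front_back k, rfl⟩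
  have h24 : (B j = i ∧ F i = j) ↔ ∃ k', i = B (F k') ∧ j = F k' := by
    constructor
    · rintro ⟨hb, hf⟩
      exact ⟨i, by rw [hf, hb], hf.symm⟩
    · rintro ⟨k, rfl, rfl⟩
      exact ⟨rfl, front_back_front k⟩
  refine ⟨?_, h23, h23.symm.trans h24⟩
  have hadj := adj i j hij
  rw [front i j hij, front i (j + 1) (by lia), back (i - 1) j (by lia)]
  lia
end
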